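/- Let E be a homogeneous effect algebra. Then E is the union of its blocks: every element of E belongs to some block of E. -/

import Mathlib

/-- An effect algebra: a partial commutative, associative operation `oplus`
(with definedness encoded via `Option`), constants `zero` and `one`,
unique orthosupplements, and `a ⊕ 1` defined only for `a = 0`. -/
structure EffectAlgebra (E : Type*) where
  oplus : E → E → Option E
  zero : E
  one : E
  comm : ∀ a b, oplus a b = oplus b a
  assoc : ∀ a b c ab abc, oplus a b = some ab → oplus ab c = some abc →
    ∃ bc, oplus b c = some bc ∧ oplus a bc = some abc
  compl_exists : ∀ a, ∃ b, oplus a b = some one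
  compl_unique : ∀ a b c, oplus a b = some one → oplus a c = some one → b = c
  add_one : ∀ a b, oplus a one = some b → a = zero

namespace EffectAlgebra

variable {E : Type*} (A : EffectAlgebra E)

/-- `a ⊥ b` : the sum `a ⊕ b` is defined. -/
def Perp (a b : E) : Prop := (A.oplus a b).isSome

/-- `a ≤ b` iff `b = a ⊕ c` for some `c`. -/
def le (a b : E) : Prop := ∃ c, A.oplus a c = some b

/-- The orthosupplement `a'`: the unique `b` with `a ⊕ b = 1`. -/
noncomputable def compl (a : E) : E :=
  @Classical.epsilon E ⟨A.zero⟩ fun b => A.oplus a b = some A.one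

/-- `a ⊖ b` : the unique `c` with `b ⊕ c = a` (defined when `b ≤ a`). -/
noncomputable def ominus (a b : E) : E :=
  @Classical.epsilon E ⟨A.zero⟩ fun c => A.oplus b c = some a

/-- Homogeneity. -/
def Homogeneous : Prop :=
  ∀ u v₁ v₂ s, A.oplus v₁ v₂ = some s → A.le u s → A.le u (A.compl s) →
    ∃ u₁ u₂, A.le u₁ v₁ ∧ A.le u₂ v₂ ∧ A.oplus u₁ u₂ = some u

/-- Riesz decomposition property. -/
def RDP : Prop :=
  ∀ u v₁ v₂ s, A.oplus v₁ v₂ = some s → A.le u s →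
    ∃ u₁ u₂, A.le u₁ v₁ ∧ A.le u₂ v₂ ∧ A.oplus u₁ u₂ = some u

/-- The sum `c₁ ⊕ … ⊕ cₙ` of a finite family (a list); `some s` iff the family
is orthogonal with sum `s`. -/
def sumList : List E → Option E
  | [] => some A.zero
  | x :: xs => (sumList xs).bind fun s => A.oplus x s

/-- The subfamily of `C` indexed by a set of indices `S ⊆ {1,…,n}`. -/
def pickList (C : List E) (S : Finset (Fin C.length)) : List E :=
  (S.sort (· ≤ ·)).map C.get

/-- `C` is an orthogonal cover of `M`. -/
def IsCoverOf (C : List E) (M : Set E) : Prop :=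
  (A.sumList C).isSome ∧
    ∀ a ∈ M, ∃ S : Finset (Fin C.length), A.sumList (pickList C S) = some a

/-- `M` is compatible with covers in `X`: every finite subset of `M` has an
orthogonal cover with range contained in `X`. -/
def CompatWithCoversIn (M X : Set E) : Prop :=
  ∀ F : Finset E, ↑F ⊆ M →
    ∃ C : List E, (∀ c ∈ C, c ∈ X) ∧ A.IsCoverOf C ↑F

/-- `M` is compatible (with covers in `E`). -/
def Compatible (M : Set E) : Prop := A.CompatWithCoversIn M Set.univ

/-- `M` is internally compatible. -/
def InternallyCompatible (M : Set E) : Prop := A.CompatWithCoversIn M M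

/-- `D` is a refinement of `C`: a partition `{P i}` of the index set of `D`
with `C i = ⊕_{j ∈ P i} D j`. -/
def IsRefinement (D C : List E) : Prop :=
  ∃ P : Fin C.length → Finset (Fin D.length),
    (∀ i j, i ≠ j → Disjoint (P i) (P j)) ∧
    (∀ k, ∃ i, k ∈ P i) ∧
    (∀ i, A.sumList (pickList D (P i)) = some (C.get i))

/-- One step of the closure construction `M ↦ M₁`. -/
def closureStep (M : Set E) : Set E :=
  {x | ∃ y ∈ M, A.le x y ∧ A.le x (A.compl y)} ∪
  {z | ∃ y ∈ M, ∃ x, A.le x y ∧ A.le x (A.compl y) ∧ A.oplus x z = some y}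

/-- The sets `Mₙ`. -/
def closureSeq (M : Set E) (n : ℕ) : Set E := (A.closureStep)^[n] M

/-- The closure `M̄ = ⋃ₙ Mₙ`. -/
def closure (M : Set E) : Set E := ⋃ n, A.closureSeq M n

/-- `B` is a sub-effect algebra of `E`. -/
def IsSubEA (B : Set E) : Prop :=
  A.one ∈ B ∧ ∀ a ∈ B, ∀ b ∈ B, A.le b a → A.ominus a b ∈ B

/-- The Riesz decomposition property for (the effect algebra on) a subset `B`. -/
def RDPOn (B : Set E) : Prop :=
  ∀ u v₁ v₂ s, u ∈ B → v₁ ∈ B → v₂ ∈ B → A.oplus v₁ v₂ = some s → A.le u s →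
    ∃ u₁ u₂, u₁ ∈ B ∧ u₂ ∈ B ∧ A.le u₁ v₁ ∧ A.le u₂ v₂ ∧ A.oplus u₁ u₂ = some u

/-- Homogeneity for (the effect algebra on) a subset `B`. -/
def HomogeneousOn (B : Set E) : Prop :=
  ∀ u v₁ v₂ s, u ∈ B → v₁ ∈ B → v₂ ∈ B → A.oplus v₁ v₂ = some s →
    A.le u s → A.le u (A.compl s) →
    ∃ u₁ u₂, u₁ ∈ B ∧ u₂ ∈ B ∧ A.le u₁ v₁ ∧ A.le u₂ v₂ ∧ A.oplus u₁ u₂ = some u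

/-- A block: a maximal sub-effect algebra satisfying the Riesz decomposition
property. -/
def IsBlock (B : Set E) : Prop :=
  A.IsSubEA B ∧ A.RDPOn B ∧
    ∀ B', A.IsSubEA B' → A.RDPOn B' → B ⊆ B' → B' = B

/-- A block of the sub-effect algebra on `F`: a maximal sub-effect algebra of
`F` satisfying the Riesz decomposition property. -/
def IsBlockIn (F B : Set E) : Prop :=
  B ⊆ F ∧ A.IsSubEA B ∧ A.RDPOn B ∧
    ∀ B', B' ⊆ F → A.IsSubEA B' → A.RDPOn B' → B ⊆ B' → B' = B

/-- `a` is sharp: the infimum `a ∧ a'` exists and equals `0`, i.e. every common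
lower bound of `a` and `a'` is `0`. -/
def Sharp (a : E) : Prop :=
  ∀ b, A.le b a → A.le b (A.compl a) → b = A.zero

/-- `a` is sharp in the sub-effect algebra on `F`. -/
def SharpIn (F : Set E) (a : E) : Prop :=
  a ∈ F ∧ ∀ b ∈ F, A.le b a → A.le b (A.compl a) → b = A.zero

/-- `a` is principal. -/
def Principal (a : E) : Prop :=
  ∀ x y s, A.le x a → A.le y a → A.oplus x y = some s → A.le s a

/-- `a` is principal in the sub-effect algebra on `B`. -/
def PrincipalIn (B : Set E) (a : E) : Prop :=
  a ∈ B ∧ ∀ x ∈ B, ∀ y ∈ B, ∀ s, A.le x a → A.le y a →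
    A.oplus x y = some s → A.le s a

/-- `a` is central: principal, and every `b` has a unique decomposition
`b = b₁ ⊕ b₂` with `b₁ ≤ a`, `b₂ ≤ a'`. -/
def Central (a : E) : Prop :=
  A.Principal a ∧ ∀ b, ∃! p : E × E,
    A.le p.1 a ∧ A.le p.2 (A.compl a) ∧ A.oplus p.1 p.2 = some b

/-- `a` is central in the sub-effect algebra on `B`. -/
def CentralIn (B : Set E) (a : E) : Prop :=
  A.PrincipalIn B a ∧ ∀ b ∈ B, ∃! p : E × E,
    p.1 ∈ B ∧ p.2 ∈ B ∧ A.le p.1 a ∧ A.le p.2 (A.compl a) ∧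
      A.oplus p.1 p.2 = some b

/-- The center `C(E)`. -/
def center : Set E := {a | A.Central a}

/-- The compatibility center `K(E)`: the intersection of all blocks. -/
def compatCenter : Set E := {x | ∀ B, A.IsBlock B → x ∈ B}

end EffectAlgebra


namespace EffectAlgebra

section Basic
variable {E : Type*} (A : EffectAlgebra E)

theorem aux_one_zero : A.oplus A.one A.zero = some A.one := by
  obtain ⟨b, hb⟩ := A.compl_exists A.one
  have h : b = A.zero := A.add_one b A.one (by rw [A.comm]; exact hb)
  rw [← h]; exact hb

theorem aux_add_zero (a : E) : A.oplus a A.zero = some a := by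
  obtain ⟨b, hb⟩ := A.compl_exists a
  have hb2 : A.oplus b a = some A.one := by rw [A.comm]; exact hb
  obtain ⟨t, ht, ht2⟩ := A.assoc b a A.zero A.one A.one hb2 A.aux_one_zero
  have : t = a := A.compl_unique b t a ht2 hb2
  rw [ht, this]

/-- The total monoid obtained by adjoining an absorbing undefined element. -/
def Ext (_A : EffectAlgebra E) := Option E

/-- Inclusion. -/
def up (a : E) : Ext A := (some a : Option E)

/-- The undefined element. -/
def bad : Ext A := (none : Option E)

/-- Total addition. -/
def extAdd (x y : Option E) : Option E := x.bind fun a => y.bind fun b => A.oplus a b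

theorem extAdd_comm (x y : Option E) : A.extAdd x y = A.extAdd y x := by
  cases x <;> cases y <;> simp [extAdd, A.comm]

theorem extAdd_assoc_aux (x y z : Option E) (s : E)
    (h : A.extAdd (A.extAdd x y) z = some s) : A.extAdd x (A.extAdd y z) = some s := by
  cases x with
  | none => simp [extAdd] at h
  | some a =>
  cases y with
  | none => simp [extAdd] at h
  | some b =>
  cases z with
  | none => simp [extAdd] at h
  | some c =>
  simp only [extAdd, Option.bind_some, Option.bind_eq_some_iff] at h ⊢
  obtain ⟨ab, hab, habc⟩ := h
  obtain ⟨bc, h1, h2⟩ := A.assoc a b c ab s hab habc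
  exact ⟨bc, h1, h2⟩

theorem extAdd_assoc (x y z : Option E) :
    A.extAdd (A.extAdd x y) z = A.extAdd x (A.extAdd y z) := by
  apply Option.ext
  intro s
  constructor
  · exact A.extAdd_assoc_aux x y z s
  · intro h
    have := A.extAdd_assoc_aux z y x s (by
      rw [A.extAdd_comm z y, A.extAdd_comm _ x]; exact h)
    rw [A.extAdd_comm y x, A.extAdd_comm z] at this
    exact this

theorem extAdd_zero (x : Option E) : A.extAdd x (some A.zero) = x := by
  cases x <;> simp [extAdd, A.aux_add_zero]

theorem zero_extAdd (x : Option E) : A.extAdd (some A.zero) x = x := by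
  rw [A.extAdd_comm]; exact A.extAdd_zero x

instance : Zero (Ext A) := ⟨A.up A.zero⟩

instance : Add (Ext A) := ⟨A.extAdd⟩

instance : AddCommMonoid (Ext A) where
  add_assoc := A.extAdd_assoc
  add_comm := A.extAdd_comm
  zero_add := A.zero_extAdd
  add_zero := A.extAdd_zero
  nsmul := nsmulRec

theorem up_inj {a b : E} (h : A.up a = A.up b) : a = b := Option.some.inj h

theorem up_ne (a : E) : A.up a ≠ A.bad := fun h => by cases h

theorem ex_up {x : Ext A} (h : x ≠ A.bad) : ∃ a, x = A.up a := by
  cases x with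
  | none => exact absurd rfl h
  | some a => exact ⟨a, rfl⟩

theorem up_zero : A.up A.zero = 0 := rfl

theorem oplus_iff {a b c : E} : A.oplus a b = some c ↔ A.up a + A.up b = A.up c := Iff.rfl

theorem bad_add (x : Ext A) : A.bad + x = A.bad := rfl

theorem ne_left {x y : Ext A} (h : x + y ≠ A.bad) : x ≠ A.bad := by
  rintro rfl; exact h (A.bad_add y)

theorem ne_right {x y : Ext A} (h : x + y ≠ A.bad) : y ≠ A.bad := by
  rw [add_comm] at h; exact A.ne_left h

theorem ext_cancel {x y z : Ext A} (h : x + y ≠ A.bad) (h2 : x + y = x + z) : y = z := by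
  obtain ⟨s, hs⟩ := A.ex_up h
  obtain ⟨s', hs'⟩ := A.compl_exists s
  rw [oplus_iff, ← hs] at hs'
  have h1 : (x + A.up s') + y = A.up A.one := by rw [← hs']; abel
  have h3 : (x + A.up s') + z = A.up A.one := by rw [← hs', h2]; abel
  have hy := A.ne_right (h1 ▸ A.up_ne _)
  have hz := A.ne_right (h3 ▸ A.up_ne _)
  have ht := A.ne_left (h1 ▸ A.up_ne _ : (x + A.up s') + y ≠ A.bad)
  obtain ⟨t, ht⟩ := A.ex_up ht
  obtain ⟨y, rfl⟩ := A.ex_up hy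
  obtain ⟨z, rfl⟩ := A.ex_up hz
  rw [ht] at h1 h3
  rw [A.compl_unique t y z h1 h3]

theorem ext_pos {x y : Ext A} (h : x + y = 0) : x = 0 := by
  have h1 : x + (y + A.up A.one) = A.up A.one := by rw [← add_assoc, h, zero_add]
  have h2 := A.ne_right (h1 ▸ A.up_ne _)
  obtain ⟨y, rfl⟩ := A.ex_up (A.ne_left h2)
  obtain ⟨t, ht⟩ := A.ex_up h2
  have := A.add_one y t ht
  subst this
  rw [up_zero, add_zero] at h
  exact h

theorem compl_spec (a : E) : A.up a + A.up (A.compl a) = A.up A.one :=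
  Classical.epsilon_spec_aux ⟨A.zero⟩ (fun b => A.oplus a b = some A.one) (A.compl_exists a)

theorem le_iff {a b : E} : A.le a b ↔ ∃ c, A.up a + A.up c = A.up b := Iff.rfl

theorem le_of {a b : E} {x : Ext A} (h : A.up a + x = A.up b) : A.le a b := by
  obtain ⟨c, rfl⟩ := A.ex_up (A.ne_right (h ▸ A.up_ne _))
  exact ⟨c, h⟩

theorem ominus_eq {a b d : E} (h : A.up b + A.up d = A.up a) : A.ominus a b = d := by
  have h1 : A.oplus b (A.ominus a b) = some a :=
    Classical.epsilon_spec_aux ⟨A.zero⟩ (fun c => A.oplus b c = some a) ⟨d, h⟩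
  rw [oplus_iff] at h1
  exact A.up_inj (A.ext_cancel (h1 ▸ A.up_ne _) (h1.trans h.symm))

theorem le_compl {a b : E} (h : A.up a + A.up b ≠ A.bad) : A.le a (A.compl b) := by
  obtain ⟨s, hs⟩ := A.ex_up h
  have h1 := A.compl_spec s
  have h2 := A.compl_spec b
  have h3 : A.up b + (A.up a + A.up (A.compl s)) = A.up A.one := by
    rw [← h1, ← hs]; abel
  have := A.ext_cancel (h3 ▸ A.up_ne _) (h3.trans h2.symm)
  exact ⟨_, this⟩

/-- Splitting over a finite orthogonal family. -/
theorem split (hH : A.Homogeneous) {ι : Type} [DecidableEq ι] (c : ι → E) (B : Finset ι) :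
    ∀ q : E, ∀ r : Ext A, A.up q + r = ∑ i ∈ B, A.up (c i) →
      A.up q + ∑ i ∈ B, A.up (c i) ≠ A.bad →
      ∃ d e : ι → E, (∀ i ∈ B, A.up (d i) + A.up (e i) = A.up (c i)) ∧
        ∑ i ∈ B, A.up (d i) = A.up q := by
  induction B using Finset.induction_on with
  | empty =>
    intro q r h _
    refine ⟨c, c, by simp, ?_⟩
    simp only [Finset.sum_empty] at h ⊢
    exact (A.ext_pos h).symm
  | insert i B hi ih =>
    intro q r h hb
    rw [Finset.sum_insert hi] at h hb
    obtain ⟨p, hp⟩ := A.ex_up (A.ne_right hb)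
    obtain ⟨m, hm⟩ := A.ex_up (A.ne_right (A.ne_right hb))
    rw [hp] at hb h
    rw [hm] at hp
    obtain ⟨q1, q2, ⟨e1, h1⟩, ⟨e2, h2⟩, h3⟩ :=
      hH q (c i) m p hp (A.le_of h) (A.le_compl hb)
    rw [oplus_iff] at h1 h2 h3
    obtain ⟨d, e, hde, hs⟩ := ih q2 (A.up e2) (by rw [hm]; exact h2) (by
      rw [hm]
      rw [← h3, ← hp] at hb
      refine A.ne_left (y := A.up q1 + A.up (c i)) ?_
      convert hb using 1
      abel)
    refine ⟨fun j => if j = i then q1 else d j, fun j => if j = i then e1 else e j, ?_, ?_⟩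
    · intro j hj
      by_cases hji : j = i
      · subst hji; simpa using h1
      · simp only [hji, if_false]
        exact hde j (Finset.mem_of_mem_insert_of_ne hj hji)
    · rw [Finset.sum_insert hi, ← h3, ← hs]
      simp only [if_true]
      congr 1
      refine Finset.sum_congr rfl fun j hj => ?_
      have : j ≠ i := fun h => hi (h ▸ hj)
      simp [this]

/-- Closed sets. -/
def Clo (X : Set E) : Prop := ∀ y ∈ X, ∀ x z, A.up x + A.up z = A.up y →
  A.up x + A.up y ≠ A.bad → x ∈ X ∧ z ∈ X

theorem Clo.zero_mem {X : Set E} (h : A.Clo X) {y : E} (hy : y ∈ X) : A.zero ∈ X :=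
  (h y hy A.zero y (by rw [up_zero, zero_add]) (by rw [up_zero, zero_add]; exact A.up_ne _)).1

/-- The generated closed set. -/
def Cl (M : Set E) : Set E := {x | ∀ X, M ⊆ X → A.Clo X → x ∈ X}

theorem subset_Cl (M : Set E) : M ⊆ A.Cl M := fun _ hx _ hX _ => hX hx

theorem clo_Cl (M : Set E) : A.Clo (A.Cl M) := fun y hy x z h1 h2 =>
  ⟨fun X hX hc => (hc y (hy X hX hc) x z h1 h2).1,
   fun X hX hc => (hc y (hy X hX hc) x z h1 h2).2⟩

theorem Cl_mono {M N : Set E} (h : M ⊆ N) : A.Cl M ⊆ A.Cl N :=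
  fun _ hx X hX hc => hx X (h.trans hX) hc

theorem Cl_eq {M : Set E} (h : A.Clo M) : A.Cl M = M :=
  Set.Subset.antisymm (fun _ hx => hx M subset_rfl h) (A.subset_Cl M)

theorem sum_sub_ne {ι : Type} [Fintype ι] [DecidableEq ι] {c : ι → E}
    (ht : ∑ i, A.up (c i) ≠ A.bad) (S : Finset ι) : ∑ i ∈ S, A.up (c i) ≠ A.bad := by
  rw [← Finset.sum_add_sum_compl S] at ht
  exact A.ne_left ht

/-- Refinement of an orthogonal family. -/
theorem refine_family (hH : A.Homogeneous) {X : Set E} (hX : A.Clo X)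
    {ι : Type} [Fintype ι] [DecidableEq ι] (c : ι → E) (hc : ∀ i, c i ∈ X)
    (ht : ∑ i, A.up (c i) ≠ A.bad) (B : Finset ι) (q : E) (r : Ext A)
    (h : A.up q + r = ∑ i ∈ B, A.up (c i))
    (hb : A.up q + ∑ i ∈ B, A.up (c i) ≠ A.bad) :
    ∃ c' : ι × Bool → E, (∀ i, c' i ∈ X) ∧ (∑ i, A.up (c' i) ≠ A.bad) ∧
      (∀ S : Finset ι, ∑ i ∈ S ×ˢ Finset.univ, A.up (c' i) = ∑ i ∈ S, A.up (c i)) ∧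
      ∑ i ∈ B ×ˢ {true}, A.up (c' i) = A.up q ∧
      ∑ i ∈ B ×ˢ {false}, A.up (c' i) = r := by
  obtain ⟨d, e, hde, hs⟩ := A.split hH c B q r h hb
  let c' : ι × Bool → E := fun p =>
    if p.1 ∈ B then (if p.2 then d p.1 else e p.1) else (if p.2 then A.zero else c p.1)
  have key : ∀ i, A.up (c' (i, true)) + A.up (c' (i, false)) = A.up (c i) := by
    intro i
    by_cases hi : i ∈ B
    · simpa [c', hi] using hde i hi
    · simp [c', hi, up_zero]
  have hS : ∀ S : Finset ι, ∑ i ∈ S ×ˢ Finset.univ, A.up (c' i) = ∑ i ∈ S, A.up (c i) := by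
    intro S
    rw [Finset.sum_product]
    refine Finset.sum_congr rfl fun i _ => ?_
    rw [Fintype.sum_bool]
    exact key i
  have hq : ∑ i ∈ B ×ˢ {true}, A.up (c' i) = A.up q := by
    rw [Finset.sum_product, ← hs]
    refine Finset.sum_congr rfl fun i hi => ?_
    simp [c', hi]
  refine ⟨c', ?_, ?_, hS, hq, ?_⟩
  · rintro ⟨i, b⟩
    by_cases hi : i ∈ B
    · have : A.up (d i) + A.up (c i) ≠ A.bad := by
        rw [← hs, ← Finset.add_sum_erase _ _ hi, ← Finset.add_sum_erase _ _ hi] at hb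
        refine A.ne_left (y := ∑ x ∈ B.erase i, A.up (d x) + ∑ x ∈ B.erase i, A.up (c x)) ?_
        convert hb using 1
        abel
      have := hX (c i) (hc i) (d i) (e i) (hde i hi) this
      cases b
      · simpa [c', hi] using this.2
      · simpa [c', hi] using this.1
    · cases b
      · simpa [c', hi] using hc i
      · simpa [c', hi] using hX.zero_mem A (hc i)
  · have := hS Finset.univ
    rw [Finset.univ_product_univ] at this
    rw [this]; exact ht
  · have h1 : A.up q + ∑ i ∈ B ×ˢ {false}, A.up (c' i) = ∑ i ∈ B, A.up (c i) := by
      rw [← hq, ← hS B]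
      simp only [Finset.sum_product, Finset.sum_singleton, Fintype.sum_bool]
      rw [← Finset.sum_add_distrib]
    refine A.ext_cancel (x := A.up q) ?_ (h1.trans h.symm)
    rw [h1]; exact A.sum_sub_ne ht B

/-- Making index sets nested. -/
theorem step (hH : A.Homogeneous) {X : Set E} (hX : A.Clo X)
    {ι : Type} [Fintype ι] [DecidableEq ι] (c : ι → E) (hc : ∀ i, c i ∈ X)
    (ht : ∑ i, A.up (c i) ≠ A.bad) (S T : Finset ι) (r : Ext A)
    (h : ∑ i ∈ S, A.up (c i) + r = ∑ i ∈ T, A.up (c i)) :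
    ∃ c' : ι × Bool → E, (∀ i, c' i ∈ X) ∧ (∑ i, A.up (c' i) ≠ A.bad) ∧
      (∀ S : Finset ι, ∑ i ∈ S ×ˢ Finset.univ, A.up (c' i) = ∑ i ∈ S, A.up (c i)) ∧
      ∃ S' : Finset (ι × Bool), S' ⊆ T ×ˢ Finset.univ ∧
        ∑ i ∈ S', A.up (c' i) = ∑ i ∈ S, A.up (c i) := by
  have e1 : ∑ i ∈ S ∩ T, A.up (c i) + ∑ i ∈ S \ T, A.up (c i) = ∑ i ∈ S, A.up (c i) :=
    Finset.sum_inter_add_sum_sdiff S T _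
  have e2 : ∑ i ∈ S ∩ T, A.up (c i) + ∑ i ∈ T \ S, A.up (c i) = ∑ i ∈ T, A.up (c i) := by
    rw [Finset.inter_comm]; exact Finset.sum_inter_add_sum_sdiff T S _
  obtain ⟨q, hq⟩ := A.ex_up (A.sum_sub_ne ht (S \ T))
  have hT := A.sum_sub_ne ht T
  have h1 : A.up q + r = ∑ i ∈ T \ S, A.up (c i) := by
    rw [← hq]
    refine (A.ext_cancel (x := ∑ i ∈ S ∩ T, A.up (c i)) ?_ ?_).symm
    · rw [e2]; exact hT
    · rw [e2, ← add_assoc, e1, h]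
  have h2 : A.up q + ∑ i ∈ T \ S, A.up (c i) ≠ A.bad := by
    rw [← hq, ← Finset.sum_union]
    · exact A.sum_sub_ne ht _
    · exact disjoint_sdiff_sdiff
  obtain ⟨c', a1, a2, a3, a4, a5⟩ := A.refine_family hH hX c hc ht (T \ S) q r h1 h2
  refine ⟨c', a1, a2, a3, (S ∩ T) ×ˢ Finset.univ ∪ (T \ S) ×ˢ {true}, ?_, ?_⟩
  · rintro ⟨i, b⟩
    simp only [Finset.mem_union, Finset.mem_product, Finset.mem_inter, Finset.mem_sdiff,
      Finset.mem_univ, Finset.mem_singleton]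
    tauto
  · rw [Finset.sum_union, a3, a4, ← hq, e1]
    rw [Finset.disjoint_left]
    rintro ⟨i, b⟩
    simp only [Finset.mem_union, Finset.mem_product, Finset.mem_inter, Finset.mem_sdiff,
      Finset.mem_univ, Finset.mem_singleton]
    tauto

/-- Covers. -/
def Cov (F X : Set E) : Prop :=
  ∃ n : ℕ, ∃ c : Fin n → E, (∀ i, c i ∈ X) ∧ (∑ i, A.up (c i) ≠ A.bad) ∧
    ∀ a ∈ F, ∃ S : Finset (Fin n), ∑ i ∈ S, A.up (c i) = A.up a

theorem Cov.of_fintype {F X : Set E} {ι : Type} [Fintype ι] (c : ι → E)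
    (hc : ∀ i, c i ∈ X) (ht : ∑ i, A.up (c i) ≠ A.bad)
    (h : ∀ a ∈ F, ∃ S : Finset ι, ∑ i ∈ S, A.up (c i) = A.up a) : A.Cov F X := by
  let e := (Fintype.equivFin ι).symm
  refine ⟨Fintype.card ι, fun i => c (e i), fun i => hc _, ?_, fun a ha => ?_⟩
  · rw [Equiv.sum_comp e (fun i => A.up (c i))]; exact ht
  · obtain ⟨S, hS⟩ := h a ha
    refine ⟨S.map e.symm.toEmbedding, ?_⟩
    rw [Finset.sum_map, ← hS]
    simp

/-- Good sets. -/
def Good (M : Set E) : Prop := ∀ F : Finset E, ↑F ⊆ M → A.Cov ↑F (A.Cl M)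

theorem good_sUnion {K : Set (Set E)} (hK : IsChain (· ⊆ ·) K) (hne : K.Nonempty)
    (h : ∀ M ∈ K, A.Good M) : A.Good (⋃₀ K) := by
  intro F hF
  obtain ⟨M, hM, hFM⟩ := DirectedOn.exists_mem_subset_of_finset_subset_biUnion (f := id)
    hne (s := F) (c := K) (hK.directedOn) (by simpa [Set.sUnion_eq_biUnion] using hF)
  obtain ⟨n, c, h1, h2, h3⟩ := h M hM F hFM
  exact ⟨n, c, fun i => A.Cl_mono (Set.subset_sUnion_of_mem hM) (h1 i), h2, h3⟩

theorem exists_max {M₀ : Set E} (h : A.Good M₀) :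
    ∃ M, M₀ ⊆ M ∧ A.Good M ∧ ∀ N, A.Good N → M ⊆ N → N ⊆ M := by
  obtain ⟨M, h1, h2⟩ := zorn_subset_nonempty {M | A.Good M}
    (fun K hK hc hne => ⟨⋃₀ K, A.good_sUnion hc hne (fun M hM => hK hM),
      fun s hs => Set.subset_sUnion_of_mem hs⟩) M₀ h
  exact ⟨M, h1, h2.1, fun N hN hMN => h2.2 hN hMN⟩

theorem good_start (x : E) : A.Good {x, A.compl x, A.one} := by
  intro F hF
  have hs := A.compl_spec x
  refine Cov.of_fintype A (ι := Bool) (fun b => if b then x else A.compl x) ?_ ?_ ?_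
  · intro b
    apply A.subset_Cl
    cases b <;> simp
  · simp [hs, A.up_ne]
  · intro a ha
    rcases hF ha with rfl | rfl | rfl
    · exact ⟨{true}, by simp⟩
    · exact ⟨{false}, by simp⟩
    · exact ⟨Finset.univ, by simp [hs]⟩

open Classical in
theorem max_clo (hH : A.Homogeneous) {M : Set E} (hM : A.Good M)
    (hmax : ∀ N, A.Good N → M ⊆ N → N ⊆ M) : A.Clo M := by
  intro y hy x z h1 h2
  have hsub : M ⊆ M ∪ {x, z} := Set.subset_union_left
  suffices hg : A.Good (M ∪ {x, z}) by
    have := hmax _ hg hsub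
    exact ⟨this (by simp), this (by simp)⟩
  intro F hF
  obtain ⟨n, c, b1, b2, b3⟩ := hM (insert y (F.filter (· ∈ M))) (by
    intro a ha
    simp at ha
    rcases ha with rfl | ha
    · exact hy
    · exact ha.2)
  obtain ⟨Y, hY⟩ := b3 y (by simp)
  obtain ⟨c', a1, a2, a3, a4, a5⟩ := A.refine_family hH (A.clo_Cl M) c b1 b2 Y x (A.up z)
    (by rw [hY, h1]) (by rw [hY]; exact h2)
  refine Cov.of_fintype A c' (fun i => A.Cl_mono hsub (a1 i)) a2 ?_
  intro a ha
  rcases hF ha with h | rfl | rfl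
  · obtain ⟨S, hS⟩ := b3 a (by
      have : a ∈ F := ha
      simp [this, h])
    exact ⟨S ×ˢ Finset.univ, by rw [a3, hS]⟩
  · exact ⟨_, a4⟩
  · exact ⟨_, a5⟩

open Classical in
theorem max_sub (hH : A.Homogeneous) {M : Set E} (hM : A.Good M)
    (hmax : ∀ N, A.Good N → M ⊆ N → N ⊆ M) {a b d : E} (ha : a ∈ M) (hb : b ∈ M)
    (h : A.up b + A.up d = A.up a) : d ∈ M := by
  have hsub : M ⊆ insert d M := Set.subset_insert _ _
  suffices hg : A.Good (insert d M) from hmax _ hg hsub (by simp)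
  intro F hF
  obtain ⟨n, c, b1, b2, b3⟩ := hM (insert a (insert b (F.filter (· ∈ M)))) (by
    intro a ha
    simp at ha
    rcases ha with rfl | rfl | ha
    · assumption
    · exact hb
    · exact ha.2)
  obtain ⟨T, hT⟩ := b3 a (by simp)
  obtain ⟨S, hS⟩ := b3 b (by simp)
  obtain ⟨c', a1, a2, a3, S', a4, a5⟩ := A.step hH (A.clo_Cl M) c b1 b2 S T (A.up d)
    (by rw [hS, hT, h])
  refine Cov.of_fintype A c' (fun i => A.Cl_mono hsub (a1 i)) a2 ?_
  intro f hf
  rcases hF hf with rfl | h'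
  · refine ⟨(T ×ˢ Finset.univ) \ S', ?_⟩
    refine (A.ext_cancel (x := A.up b) (h ▸ A.up_ne _) ?_).symm
    rw [h, ← hS, ← a5, add_comm, Finset.sum_sdiff a4, a3, hT]
  · obtain ⟨S, hS⟩ := b3 f (by
      have : f ∈ F := hf
      simp [this, h'])
    exact ⟨S ×ˢ Finset.univ, by rw [a3, hS]⟩

theorem exists_rdp (hH : A.Homogeneous) (x : E) :
    ∃ B : Set E, A.IsSubEA B ∧ A.RDPOn B ∧ x ∈ B := by
  classical
  obtain ⟨M, hM0, hM, hmax⟩ := A.exists_max (A.good_start x)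
  have hclo := A.max_clo hH hM hmax
  have hone : A.one ∈ M := hM0 (by simp)
  have hsub : ∀ {a b d : E}, a ∈ M → b ∈ M → A.up b + A.up d = A.up a → d ∈ M :=
    fun ha hb h => A.max_sub hH hM hmax ha hb h
  have hadd : ∀ {a b s : E}, a ∈ M → b ∈ M → A.up a + A.up b = A.up s → s ∈ M := by
    intro a b s ha hb h
    have h1 := hsub hone ha (A.compl_spec a)
    have h2 : A.up b + A.up (A.compl s) = A.up (A.compl a) := by
      have h3 : A.up a + (A.up b + A.up (A.compl s)) = A.up A.one := by
        rw [← add_assoc, h, A.compl_spec]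
      exact A.ext_cancel (h3 ▸ A.up_ne _) (h3.trans (A.compl_spec a).symm)
    have h4 := hsub h1 hb h2
    exact hsub hone h4 (by rw [add_comm]; exact A.compl_spec s)
  have hsum : ∀ {ι : Type} (c : ι → E) (_ : ∀ i, c i ∈ M) (S : Finset ι) (s : E),
      ∑ i ∈ S, A.up (c i) = A.up s → s ∈ M := by
    intro ι c hc S
    induction S using Finset.induction_on with
    | empty =>
      intro s hs
      rw [Finset.sum_empty, ← up_zero] at hs
      rw [← A.up_inj hs]
      exact hclo.zero_mem A hone
    | insert i S hi ih =>
      intro s hs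
      rw [Finset.sum_insert hi] at hs
      obtain ⟨t, ht⟩ := A.ex_up (A.ne_right (hs ▸ A.up_ne _))
      exact hadd (hc i) (ih t ht) (by rw [← ht, hs])
  refine ⟨M, ⟨hone, ?_⟩, ?_, hM0 (by simp)⟩
  · rintro a ha b hb ⟨d, hd⟩
    rw [A.ominus_eq hd]
    exact hsub ha hb hd
  · rintro u v1 v2 s hu hv1 hv2 hs ⟨w, hw⟩
    rw [oplus_iff] at hs hw
    have hsM := hadd hv1 hv2 hs
    obtain ⟨n, c, b1, b2, b3⟩ := hM {u, v1, s} (by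
      intro a ha
      simp at ha
      rcases ha with rfl | rfl | rfl <;> assumption)
    rw [A.Cl_eq hclo] at b1
    obtain ⟨U, hU⟩ := b3 u (by simp)
    obtain ⟨V, hV⟩ := b3 v1 (by simp)
    obtain ⟨S, hS⟩ := b3 s (by simp)
    obtain ⟨c1, a1, a2, a3, V', a4, a5⟩ := A.step hH hclo c b1 b2 V S (A.up v2)
      (by rw [hV, hS, hs])
    obtain ⟨c2, d1, d2, d3, U', d4, d5⟩ := A.step hH hclo c1 a1 a2
      (U ×ˢ Finset.univ) (S ×ˢ Finset.univ) (A.up w) (by rw [a3, a3, hU, hS, hw])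
    set SS : Finset ((Fin n × Bool) × Bool) := (S ×ˢ Finset.univ) ×ˢ Finset.univ
    set VV : Finset ((Fin n × Bool) × Bool) := V' ×ˢ Finset.univ
    have hVS : VV ⊆ SS := Finset.product_subset_product a4 subset_rfl
    have eV : ∑ i ∈ VV, A.up (c2 i) = A.up v1 := by rw [d3, a5, hV]
    have eS : ∑ i ∈ SS, A.up (c2 i) = A.up s := by rw [d3, a3, hS]
    have eU : ∑ i ∈ U', A.up (c2 i) = A.up u := by rw [d5, a3, hU]
    have eW : ∑ i ∈ SS \ VV, A.up (c2 i) = A.up v2 := by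
      refine (A.ext_cancel (x := A.up v1) (hs ▸ A.up_ne _) ?_).symm
      rw [hs, ← eV, add_comm, Finset.sum_sdiff hVS, eS]
    have hle : ∀ {P Q : Finset ((Fin n × Bool) × Bool)} {p q : E}, P ⊆ Q →
        ∑ i ∈ P, A.up (c2 i) = A.up p → ∑ i ∈ Q, A.up (c2 i) = A.up q → A.le p q := by
      intro P Q p q hPQ hp hq
      refine A.le_of (x := ∑ i ∈ Q \ P, A.up (c2 i)) ?_
      rw [← hp, add_comm, Finset.sum_sdiff hPQ, hq]
    obtain ⟨u1, hu1⟩ := A.ex_up (A.sum_sub_ne d2 (U' ∩ VV))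
    obtain ⟨u2, hu2⟩ := A.ex_up (A.sum_sub_ne d2 (U' \ VV))
    refine ⟨u1, u2, hsum c2 d1 _ _ hu1, hsum c2 d1 _ _ hu2,
      hle Finset.inter_subset_right hu1 eV,
      hle (Finset.sdiff_subset_sdiff d4 subset_rfl) hu2 eW, ?_⟩
    rw [oplus_iff, ← hu1, ← hu2, ← eU]
    exact Finset.sum_inter_add_sum_sdiff U' VV _

end Basic

end EffectAlgebra

/-- A homogeneous effect algebra is the union of its blocks. -/
theorem union_of_blocks {E : Type*} (A : EffectAlgebra E)
    (hH : A.Homogeneous) :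
    ∀ x : E, ∃ B : Set E, A.IsBlock B ∧ x ∈ B := by
  intro x
  obtain ⟨B, h1, h2, h3⟩ := A.exists_rdp hH x
  obtain ⟨M, hM1, hM2⟩ := zorn_subset_nonempty {M | A.IsSubEA M ∧ A.RDPOn M} (by
    intro K hK hc hne
    have dir : ∀ a ∈ ⋃₀ K, ∀ b ∈ ⋃₀ K, ∃ M ∈ K, a ∈ M ∧ b ∈ M := by
      rintro a ⟨P, hP, ha⟩ b ⟨Q, hQ, hb⟩
      rcases hc.total hP hQ with h | h
      · exact ⟨Q, hQ, h ha, hb⟩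
      · exact ⟨P, hP, ha, h hb⟩
    refine ⟨⋃₀ K, ⟨⟨?_, ?_⟩, ?_⟩, fun s hs => Set.subset_sUnion_of_mem hs⟩
    · obtain ⟨P, hP⟩ := hne
      exact ⟨P, hP, (hK hP).1.1⟩
    · intro a ha b hb hab
      obtain ⟨P, hP, ha, hb⟩ := dir a ha b hb
      exact ⟨P, hP, (hK hP).1.2 a ha b hb hab⟩
    · intro u v1 v2 s hu hv1 hv2 hs hus
      obtain ⟨P, hP, hu, hv1⟩ := dir u hu v1 hv1
      obtain ⟨Q, hQ, hv2⟩ := hv2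
      have : ∃ R ∈ K, u ∈ R ∧ v1 ∈ R ∧ v2 ∈ R := by
        rcases hc.total hP hQ with h | h
        · exact ⟨Q, hQ, h hu, h hv1, hv2⟩
        · exact ⟨P, hP, hu, hv1, h hv2⟩
      obtain ⟨R, hR, hu, hv1, hv2⟩ := this
      obtain ⟨u1, u2, k1, k2, k3⟩ := (hK hR).2 u v1 v2 s hu hv1 hv2 hs hus
      exact ⟨u1, u2, ⟨R, hR, k1⟩, ⟨R, hR, k2⟩, k3⟩) B ⟨h1, h2⟩
  exact ⟨M, ⟨hM2.1.1, hM2.1.2, fun B' g1 g2 g3 =>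
    Set.Subset.antisymm (hM2.2 ⟨g1, g2⟩ g3) g3⟩, hM1 h3⟩
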